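/- arXiv:1706.06578 — 2 statements merged into one kernel-verified Lean document; each statement's English description precedes it below -/
import Mathlib

section
/- Let r ≥ 3 and q = p^h with p prime, h ≥ 1, and let V be a set of points of PG(r,q^2) whose characteristic vector v^V belongs to C_p. Then for every projective subspace S of PG(r,q^2) of dimension at least 2, the characteristic vector of V ∩ S, regarded as a function on the points of S, lies in the F_p-span of the characteristic vectors of the hyperplanes of S (i.e., of the subspaces of codimension 1 in S). -/
/-!
Common framework: `ProjPoint F n` is the set of points of the projective space
PG(n-1, |F|) (so PG(r, q²) corresponds to `n = r + 1` and `Fintype.card F = q ^ 2`).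
Projective subspaces of projective dimension `k` are the submodules of `Fin n → F`
of `finrank` equal to `k + 1`; lines have finrank 2, planes finrank 3 and
hyperplanes finrank `n - 1 = r`.
-/

open Module Matrix

/-- The points of the projective space PG(n-1, |F|): one-dimensional subspaces
of `F^n`. -/
def ProjPoint (F : Type) [Field F] (n : ℕ) : Type :=
  {W : Submodule F (Fin n → F) // finrank F W = 1}

/-- The set of projective points lying in a given subspace `W`. -/
def pointsIn (F : Type) [Field F] (n : ℕ) (W : Submodule F (Fin n → F)) :
    Set (ProjPoint F n) :=
  {P | P.1 ≤ W}

/-- The number of points of `V` lying in the subspace `W`. -/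
noncomputable def secant (F : Type) [Field F] (n : ℕ) (V : Set (ProjPoint F n))
    (W : Submodule F (Fin n → F)) : ℕ :=
  (V ∩ pointsIn F n W).ncard

/-- The characteristic vector of a set of projective points, with values in `F_p`. -/
noncomputable def charVec (F : Type) [Field F] (p n : ℕ) (S : Set (ProjPoint F n)) :
    ProjPoint F n → ZMod p :=
  Set.indicator S 1

/-- `C_p`: the `F_p`-code spanned by the characteristic vectors of hyperplanes. -/
def hypCode (F : Type) [Field F] (p n : ℕ) :
    Submodule (ZMod p) (ProjPoint F n → ZMod p) :=
  Submodule.span (ZMod p)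
    {v | ∃ H : Submodule F (Fin n → F), finrank F H = n - 1 ∧
      v = charVec F p n (pointsIn F n H)}

/-- A quasi-Hermitian variety of PG(r, q²): it has the size of a non-singular
Hermitian variety and the same two intersection numbers with hyperplanes.
(All identities are stated multiplied through by `q² - 1`.) -/
def IsQuasiHermitian (F : Type) [Field F] (q r : ℕ)
    (V : Set (ProjPoint F (r + 1))) : Prop :=
  (V.ncard : ℤ) * ((q : ℤ) ^ 2 - 1)
      = ((q : ℤ) ^ (r + 1) + (-1) ^ r) * ((q : ℤ) ^ r - (-1) ^ r) ∧
  ∀ H : Submodule F (Fin (r + 1) → F), finrank F H = r →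
    ((secant F (r + 1) V H : ℤ) * ((q : ℤ) ^ 2 - 1)
        = ((q : ℤ) ^ r + (-1) ^ (r - 1)) * ((q : ℤ) ^ (r - 1) - (-1) ^ (r - 1)) ∨
     (secant F (r + 1) V H : ℤ) * ((q : ℤ) ^ 2 - 1)
        = ((q : ℤ) ^ 2 - 1)
          + (q : ℤ) ^ 2 * (((q : ℤ) ^ (r - 1) + (-1) ^ r) * ((q : ℤ) ^ (r - 2) - (-1) ^ r)))

/-- The zero set, in PG(n-1,|F|), of the Hermitian form `x ↦ xᵀ A x^(q)`. -/
def hermSet (F : Type) [Field F] (q n : ℕ) (A : Matrix (Fin n) (Fin n) F) :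
    Set (ProjPoint F n) :=
  {P | ∀ x ∈ P.1, ∑ i, ∑ j, x i * A i j * (x j) ^ q = 0}

/-- A non-singular Hermitian variety of PG(n-1, q²). -/
def IsNonsingHermitian (F : Type) [Field F] (q n : ℕ)
    (V : Set (ProjPoint F n)) : Prop :=
  ∃ A : Matrix (Fin n) (Fin n) F, IsUnit A.det ∧
    Aᵀ = A.map (fun a => a ^ q) ∧ V = hermSet F q n A

/-- A singular Hermitian variety of PG(n-1, q²) whose singular space (the radical
of the Hermitian form) has projective dimension `d`. -/
def IsSingularHermitian (F : Type) [Field F] (q n d : ℕ)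
    (S : Set (ProjPoint F n)) : Prop :=
  ∃ A : Matrix (Fin n) (Fin n) F,
    Aᵀ = A.map (fun a => a ^ q) ∧
    finrank F (LinearMap.ker (Matrix.toLin' Aᵀ)) = d + 1 ∧
    S = hermSet F q n A

/-- A `d`-singular quasi-Hermitian variety of PG(r, q²). -/
def IsSingularQuasiHermitian (F : Type) [Field F] (q r d : ℕ)
    (S : Set (ProjPoint F (r + 1))) : Prop :=
  ∃ S₀ : Set (ProjPoint F (r + 1)), IsSingularHermitian F q (r + 1) d S₀ ∧
    S.ncard = S₀.ncard ∧
    ∀ H : Submodule F (Fin (r + 1) → F), finrank F H = r →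
      ∃ H₀ : Submodule F (Fin (r + 1) → F), finrank F H₀ = r ∧
        secant F (r + 1) S H = secant F (r + 1) S₀ H₀

/-- `U` is a classical unital (Hermitian curve) of the plane `π` of PG(n-1, q²):
in some coordinatization `e` of `π`, it is the zero set of a non-degenerate
Hermitian form on `F³`. -/
def IsClassicalUnital (F : Type) [Field F] (q n : ℕ)
    (π : Submodule F (Fin n → F)) (U : Set (ProjPoint F n)) : Prop :=
  ∃ e : (Fin 3 → F) →ₗ[F] (Fin n → F), LinearMap.ker e = ⊥ ∧ LinearMap.range e = π ∧
    ∃ A : Matrix (Fin 3) (Fin 3) F, IsUnit A.det ∧ Aᵀ = A.map (fun a => a ^ q) ∧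
      U = {P | ∃ y : Fin 3 → F, y ≠ 0 ∧ P.1 = Submodule.span F {e y} ∧
        ∑ i, ∑ j, y i * A i j * (y j) ^ q = 0}

/-!
Restriction to `S` is multiplication by `v^S`, so by linearity it suffices to restrict the
hyperplanes `H` of the whole space. If `S ⊈ H`, then `H ∩ S` is a hyperplane of `S`. If `S ⊆ H`,
the restriction is `v^S` itself. Choose functionals `f`, `g` that are linearly independent on `S`
and consider the pencil of hyperplanes `g = 0` and `f = t g`, for `t` in `F`. A point lies on all
`|F| + 1` of them or on exactly one, and these two numbers agree modulo `p`; so `v^S` is the sum of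
the restrictions to `S` of the members of the pencil, none of which contains `S`.
-/

section LinearAlgebra

variable {K E : Type*} [Field K] [AddCommGroup E] [Module K E]

theorem ite_add_sum_ite_sub_mul_eq_one [Fintype K] [DecidableEq K] {R : Type*} [NonAssocSemiring R]
    (hR : (Fintype.card K : R) = 0) (a c : K) :
    (if c = 0 then (1 : R) else 0) + ∑ t : K, (if a - t * c = 0 then 1 else 0) = 1 := by
  rcases eq_or_ne c 0 with rfl | hc
  · by_cases ha : a = 0 <;> simp [ha, hR]
  · have root_unique (t : K) : a - t * c = 0 ↔ t = a / c := by
      rw [sub_eq_zero, eq_comm, eq_div_iff hc]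
    simp [root_unique, hc]

theorem finrank_inf_eq_sub_one_of_not_le [FiniteDimensional K E] {H S : Submodule K E}
    (hH : finrank K E ≤ finrank K H + 1) (hSH : ¬S ≤ H) :
    finrank K (H ⊓ S : Submodule K E) = finrank K S - 1 := by
  have dim_formula := Submodule.finrank_sup_add_finrank_inf_eq H S
  have sup_gt : finrank K H < finrank K (H ⊔ S : Submodule K E) :=
    Submodule.finrank_lt_finrank_of_lt (left_lt_sup.2 hSH)
  have sup_le := Submodule.finrank_le (H ⊔ S)
  lia

theorem exists_pencil_not_le_ker {S : Submodule K E} (hS : 2 ≤ finrank K S) :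
    ∃ f g : Dual K E, ¬S ≤ LinearMap.ker g ∧ ∀ t : K, ¬S ≤ LinearMap.ker (f - t • g) := by
  have : FiniteDimensional K S := FiniteDimensional.of_finrank_pos (by lia)
  have one_lt_finrank_dual : 1 < finrank K (Dual K S) := by
    rwa [Subspace.dual_finrank_eq]
  have : Nontrivial (Dual K S) := nontrivial_of_finrank_pos (zero_lt_one.trans one_lt_finrank_dual)
  obtain ⟨g', hg'⟩ := exists_ne (0 : Dual K S)
  obtain ⟨f', hf'⟩ := exists_linearIndependent_pair_of_one_lt_finrank one_lt_finrank_dual hg'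
  obtain ⟨g, rfl⟩ := g'.exists_extend
  obtain ⟨f, rfl⟩ := f'.exists_extend
  have comp_eq_zero {φ : Dual K E} (h : S ≤ LinearMap.ker φ) : φ.comp S.subtype = 0 :=
    LinearMap.ext fun x => h x.2
  refine ⟨f, g, fun h => hg' (comp_eq_zero h), fun t h => ?_⟩
  exact (LinearIndependent.pair_iff' hg').1 hf' t (sub_eq_zero.1 (comp_eq_zero h)).symm

end LinearAlgebra

section Code

variable {F : Type} [Field F] {p n : ℕ}

theorem pointsIn_inf (W W' : Submodule F (Fin n → F)) :
    pointsIn F n (W ⊓ W') = pointsIn F n W ∩ pointsIn F n W' := by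
  ext P
  simp [pointsIn]

theorem charVec_inter (A B : Set (ProjPoint F n)) :
    charVec F p n (A ∩ B) = charVec F p n A * charVec F p n B :=
  Set.inter_indicator_one

theorem exists_forall_mem_pointsIn_iff_mem (P : ProjPoint F n) :
    ∃ x : Fin n → F, ∀ W : Submodule F (Fin n → F), P ∈ pointsIn F n W ↔ x ∈ W := by
  obtain ⟨x, -, hx⟩ := (atom_iff_nonzero_span _).1 (Submodule.isAtom_iff_finrank_eq_one.2 P.2)
  refine ⟨x, fun W => ?_⟩
  rw [pointsIn, Set.mem_ofPred_eq, hx, Submodule.span_singleton_le_iff_mem]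

theorem charVec_ker_add_sum_charVec_ker_eq_one [Fintype F] (hp : p ∣ Fintype.card F)
    (f g : Dual F (Fin n → F)) :
    charVec F p n (pointsIn F n (LinearMap.ker g)) +
      ∑ t : F, charVec F p n (pointsIn F n (LinearMap.ker (f - t • g))) = 1 := by
  classical
  funext P
  obtain ⟨x, hx⟩ := exists_forall_mem_pointsIn_iff_mem P
  simpa [charVec, Set.indicator_apply, hx] using
    ite_add_sum_ite_sub_mul_eq_one ((ZMod.natCast_eq_zero_iff _ p).2 hp) (f x) (g x)

/-- The code of a projective subspace `S`: the `F_p`-span of the characteristic vectors of the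
hyperplanes of `S`. Its words are functions on all points of the ambient space, vanishing outside
`S`, rather than functions on the points of `S`. -/
def hypCodeIn (p : ℕ) (S : Submodule F (Fin n → F)) :
    Submodule (ZMod p) (ProjPoint F n → ZMod p) :=
  Submodule.span (ZMod p)
    {v | ∃ W : Submodule F (Fin n → F), W ≤ S ∧ finrank F W = finrank F S - 1 ∧
      v = charVec F p n (pointsIn F n W)}

variable {H S : Submodule F (Fin n → F)}

theorem charVec_mul_charVec_mem_hypCodeIn_of_not_le (hH : n ≤ finrank F H + 1) (hSH : ¬S ≤ H) :
    charVec F p n (pointsIn F n H) * charVec F p n (pointsIn F n S) ∈ hypCodeIn p S := by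
  rw [← charVec_inter, ← pointsIn_inf]
  exact Submodule.subset_span
    ⟨H ⊓ S, inf_le_right, finrank_inf_eq_sub_one_of_not_le (by simpa using hH) hSH, rfl⟩

theorem charVec_mem_hypCodeIn_self [Fintype F] (hp : p ∣ Fintype.card F) (hS : 2 ≤ finrank F S) :
    charVec F p n (pointsIn F n S) ∈ hypCodeIn p S := by
  obtain ⟨f, g, hg, hfg⟩ := exists_pencil_not_le_ker hS
  have ker_mem {φ : Dual F (Fin n → F)} (hφ : ¬S ≤ LinearMap.ker φ) :
      charVec F p n (pointsIn F n (LinearMap.ker φ)) * charVec F p n (pointsIn F n S) ∈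
        hypCodeIn p S := by
    have φ_ne_zero : φ ≠ 0 := by
      rintro rfl
      simp at hφ
    have finrank_ker := Dual.finrank_ker_add_one_of_ne_zero φ_ne_zero
    exact charVec_mul_charVec_mem_hypCodeIn_of_not_le (by simp [finrank_ker]) hφ
  rw [← one_mul (charVec F p n (pointsIn F n S)),
    ← charVec_ker_add_sum_charVec_ker_eq_one hp f g, add_mul, Finset.sum_mul]
  exact add_mem (ker_mem hg) (sum_mem fun t _ => ker_mem (hfg t))

theorem charVec_mul_charVec_mem_hypCodeIn [Fintype F] (hp : p ∣ Fintype.card F)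
    (hH : n ≤ finrank F H + 1) (hS : 2 ≤ finrank F S) :
    charVec F p n (pointsIn F n H) * charVec F p n (pointsIn F n S) ∈ hypCodeIn p S := by
  by_cases hSH : S ≤ H
  · rw [← charVec_inter, ← pointsIn_inf, inf_eq_right.2 hSH]
    exact charVec_mem_hypCodeIn_self hp hS
  · exact charVec_mul_charVec_mem_hypCodeIn_of_not_le hH hSH

theorem stmt4_general [Fintype F] (hp : p ∣ Fintype.card F) {v : ProjPoint F n → ZMod p}
    (hv : v ∈ hypCode F p n) (hS : 2 ≤ finrank F S) :
    v * charVec F p n (pointsIn F n S) ∈ hypCodeIn p S := by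
  induction hv using Submodule.span_induction with
  | mem v hyperplane =>
    obtain ⟨H, hH, rfl⟩ := hyperplane
    exact charVec_mul_charVec_mem_hypCodeIn hp (by lia) hS
  | zero => simp
  | add v w _ _ hv hw => simpa only [add_mul] using add_mem hv hw
  | smul c v _ hv => simpa only [smul_mul_assoc] using Submodule.smul_mem _ c hv

end Code

/-- for a point set `V` with characteristic vector in `C_p`, for every
projective subspace `S` of projective dimension at least 2 (i.e. `finrank ≥ 3`), the
characteristic vector of `V ∩ S` lies in the `F_p`-span of the characteristic vectors
of the hyperplanes of `S` (subspaces of codimension 1 in `S`). -/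
theorem stmt4 (p h q r : ℕ) (hp : p.Prime) (hh : 1 ≤ h) (hq : q = p ^ h) (hr : 3 ≤ r)
    (F : Type) [Field F] [Fintype F] (hF : Fintype.card F = q ^ 2)
    (V : Set (ProjPoint F (r + 1)))
    (hcode : charVec F p (r + 1) V ∈ hypCode F p (r + 1)) :
    ∀ S : Submodule F (Fin (r + 1) → F), 3 ≤ finrank F S →
      charVec F p (r + 1) (V ∩ pointsIn F (r + 1) S) ∈
        Submodule.span (ZMod p)
          {v | ∃ W : Submodule F (Fin (r + 1) → F), W ≤ S ∧
            finrank F W = finrank F S - 1 ∧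
            v = charVec F p (r + 1) (pointsIn F (r + 1) W)} := by
  intro S hS
  have p_dvd_card : p ∣ Fintype.card F := by
    rw [hF, hq, ← pow_mul]
    exact dvd_pow_self p (by lia)
  rw [charVec_inter]
  exact stmt4_general p_dvd_card hcode (by lia)
end

section
/- Let r ≥ 3 and q = p^h > 4 with p prime, h ≥ 1, and let V be a quasi-Hermitian variety of PG(r,q^2) whose characteristic vector v^V belongs to C_p. Then every line ℓ of PG(r,q^2) satisfies either |ℓ ∩ V| ≤ q+1 or |ℓ ∩ V| ≥ q^2-q+1. -/
/-!
Common framework: `ProjPoint F n` is the set of points of the projective space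
PG(n-1, |F|) (so PG(r, q²) corresponds to `n = r + 1` and `Fintype.card F = q ^ 2`).
Projective subspaces of projective dimension `k` are the submodules of `Fin n → F`
of `finrank` equal to `k + 1`; lines have finrank 2, planes finrank 3 and
hyperplanes finrank `n - 1 = r`.
-/

open Module Matrix

/-!
Write `Q = q²`. A codeword lifts to a function on `F^n` that is a combination of indicators of
linear hyperplanes, and the indicator of `ker φ` is `1 - φ ^ (Q - 1)`. On an affine plane
`a + t b + y w` the lift is therefore a family of polynomials `f_t(y)`, and because power sums over
`F` of exponent below `Q - 1` vanish, the moment `∑ t, t ^ k f_t` has degree at most `k`.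
Let `s` be the number of `t` with `f_t(0) ≠ 0` and `N(y)` the number with `f_t(y) ≠ 0`. The `s × s`
Hankel determinant of the moments is nonzero at `0`, has degree at most `s (s - 1)`, and is
divisible by `(X - y) ^ (s - N(y))` for every `y`, since its value at `y` has rank at most `N(y)`.
Counting roots gives `s (Q - s) ≤ ∑_{y ≠ 0} N(y)`.

Here `s` counts the points of `V` on a line `ℓ` other than a chosen point `B` of `ℓ`, and the right
side counts points of `V` in a plane through `ℓ`. Averaging over all such planes bounds `s (Q - s)`
in terms of `|V|`; for `|V|` the size of a Hermitian variety this excludes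
`q + 2 ≤ s ≤ q² - q - 2`. Taking `B` off `V` or on `V`, as needed, excludes
`q + 2 ≤ |ℓ ∩ V| ≤ q² - q - 1`, and `|ℓ ∩ V| = q² - q` is impossible because `|ℓ ∩ V| ≡ 1 (mod p)`.
-/

section MomentHankel

open Polynomial

open scoped Finset

theorem pow_card_dvd_det {R n : Type*} [CommRing R] [Fintype n] [DecidableEq n]
    (A : Matrix n n R) (d : R) (S : Finset n) (hd : ∀ j ∈ S, ∀ i, d ∣ A i j) :
    d ^ #S ∣ A.det := by
  rw [Matrix.det_apply]
  refine Finset.dvd_sum fun σ _ => dvd_smul_of_dvd _ ?_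
  calc d ^ #S = ∏ _j ∈ S, d := (Finset.prod_const d).symm
    _ ∣ ∏ j ∈ S, A (σ j) j := Finset.prod_dvd_prod_of_dvd _ _ fun j hj => hd j hj _
    _ ∣ ∏ j, A (σ j) j := Finset.prod_dvd_prod_of_subset _ _ _ S.subset_univ

variable {K : Type*} [Field K]

theorem X_sub_C_pow_dvd_det {n : Type*} [Fintype n] [DecidableEq n]
    (A : Matrix n n K[X]) (y : K) :
    (X - C y) ^ (Fintype.card n - ((evalRingHom y).mapMatrix A).rank) ∣ A.det := by
  classical
  obtain ⟨L, L', D, hD⟩ := Matrix.Pivot.exists_list_transvec_mul_mul_list_transvec_eq_diagonal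
    ((evalRingHom y).mapMatrix A)
  set P := (L.map Matrix.TransvectionStruct.toMatrix).prod
  set P' := (L'.map Matrix.TransvectionStruct.toMatrix).prod
  have hP : P.det = 1 := Matrix.TransvectionStruct.det_toMatrix_prod L
  have hP' : P'.det = 1 := Matrix.TransvectionStruct.det_toMatrix_prod L'
  have hrank : ((evalRingHom y).mapMatrix A).rank = #{i | D i ≠ 0} := by
    rw [← Fintype.card_subtype, ← Matrix.rank_diagonal, ← hD,
      Matrix.rank_mul_eq_left_of_isUnit_det _ _ (hP' ▸ isUnit_one),
      Matrix.rank_mul_eq_right_of_isUnit_det _ _ (hP ▸ isUnit_one)]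
  set B := (C : K →+* K[X]).mapMatrix P * A * (C : K →+* K[X]).mapMatrix P'
  have hdet : B.det = A.det := by
    simp only [B, Matrix.det_mul, ← RingHom.map_det, hP, hP', map_one, one_mul, mul_one]
  have hB : (evalRingHom y).mapMatrix B = Matrix.diagonal D := by
    have evalC (M : Matrix n n K) :
        (evalRingHom y).mapMatrix ((C : K →+* K[X]).mapMatrix M) = M := by ext; simp
    rw [map_mul, map_mul, evalC, evalC, hD]
  have hcol : ∀ j ∈ ({j | D j = 0} : Finset n), ∀ i, X - C y ∣ B i j := by
    intro j hj i
    have hij : eval y (B i j) = Matrix.diagonal D i j := congrFun (congrFun hB i) j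
    rw [dvd_iff_isRoot, IsRoot, hij, Matrix.diagonal_apply]
    split_ifs with h
    · exact h ▸ (Finset.mem_filter.mp hj).2
    · rfl
  have hcard : Fintype.card n - #{i | D i ≠ 0} = #{i | D i = 0} := by
    rw [← Finset.card_univ, ← Finset.card_filter_add_card_filter_not (D · = 0),
      Nat.add_sub_cancel_right]
  rw [← hdet, hrank, hcard]
  exact pow_card_dvd_det B _ _ hcol

variable {ι : Type*} [Fintype ι] (x : ι → K) (f : ι → K[X])

/-- The `k`-th power moment of the polynomial weights `f i` placed at the nodes `x i`. -/
noncomputable def powerMoment (k : ℕ) : K[X] :=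
  ∑ i, C (x i ^ k) * f i

/-- The `s × s` Hankel matrix of the power moments. Its value at `y` is a Gram matrix of
Vandermonde vectors, so its rank is controlled by the number of weights not vanishing at `y`. -/
noncomputable def momentHankel (s : ℕ) : Matrix (Fin s) (Fin s) K[X] :=
  Matrix.of fun i j => powerMoment x f (i + j)

theorem mapMatrix_eval_momentHankel [DecidableEq ι] (s : ℕ) (y : K) :
    (evalRingHom y).mapMatrix (momentHankel x f s) =
      (Matrix.rectVandermonde x 1 s)ᵀ * Matrix.diagonal (fun i => eval y (f i)) *
        Matrix.rectVandermonde x 1 s := by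
  ext j k
  rw [Matrix.mul_assoc, Matrix.mul_apply]
  simp only [momentHankel, powerMoment, RingHom.mapMatrix_apply, Matrix.map_apply,
    Matrix.of_apply, coe_evalRingHom, eval_finsetSum, eval_mul, eval_C, Matrix.transpose_apply,
    Matrix.rectVandermonde_apply, Matrix.diagonal_mul, Pi.one_apply, one_pow, mul_one, pow_add]
  exact Finset.sum_congr rfl fun i _ => by ring

theorem rank_eval_momentHankel_le [DecidableEq K] (s : ℕ) (y : K) :
    ((evalRingHom y).mapMatrix (momentHankel x f s)).rank ≤ #{i | eval y (f i) ≠ 0} := by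
  classical
  rw [mapMatrix_eval_momentHankel, ← Fintype.card_subtype, ← Matrix.rank_diagonal]
  exact (Matrix.rank_mul_le_left _ _).trans (Matrix.rank_mul_le_right _ _)

theorem natDegree_det_momentHankel_le (hf : ∀ k, (powerMoment x f k).natDegree ≤ k) (s : ℕ) :
    (momentHankel x f s).det.natDegree ≤ s * (s - 1) := by
  rw [Matrix.det_apply]
  refine natDegree_sum_le_of_forall_le _ _ fun σ _ => ?_
  calc (Equiv.Perm.sign σ • ∏ i, momentHankel x f s (σ i) i).natDegree
      ≤ (∏ i, momentHankel x f s (σ i) i).natDegree := natDegree_smul_le _ _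
    _ ≤ ∑ i, (momentHankel x f s (σ i) i).natDegree := natDegree_prod_le _ _
    _ ≤ ∑ i, ((σ i : ℕ) + i) := Finset.sum_le_sum fun i _ => hf _
    _ = (∑ i ∈ Finset.range s, i) * 2 := by
      rw [Finset.sum_add_distrib, Equiv.sum_comp σ (fun i : Fin s => (i : ℕ)),
        Fin.sum_univ_eq_sum_range (fun i => i) s, mul_two]
    _ = s * (s - 1) := Finset.sum_range_id_mul_two s

variable {x} [DecidableEq K]

theorem eval_det_momentHankel_ne_zero (hx : Function.Injective x) {s : ℕ} {y : K}
    (hs : #{i | eval y (f i) ≠ 0} = s) : eval y (momentHankel x f s).det ≠ 0 := by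
  classical
  let e : Fin s ≃ {i // eval y (f i) ≠ 0} :=
    (Fintype.equivFinOfCardEq (by rw [Fintype.card_subtype, hs])).symm
  let v : Fin s → K := fun j => x (e j)
  have hv : (Matrix.vandermonde v).det ≠ 0 :=
    Matrix.det_vandermonde_ne_zero_iff.mpr (hx.comp (Subtype.val_injective.comp e.injective))
  have hgram : (evalRingHom y).mapMatrix (momentHankel x f s) =
      (Matrix.vandermonde v)ᵀ * Matrix.diagonal (fun j => eval y (f (e j))) *
        Matrix.vandermonde v := by
    ext j k
    rw [Matrix.mul_assoc, Matrix.mul_apply]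
    simp only [momentHankel, powerMoment, RingHom.mapMatrix_apply, Matrix.map_apply,
      Matrix.of_apply, coe_evalRingHom, eval_finsetSum, eval_mul, eval_C,
      Matrix.transpose_apply, Matrix.vandermonde_apply, Matrix.diagonal_mul]
    calc ∑ i, x i ^ (j + k : ℕ) * eval y (f i)
        = ∑ i with eval y (f i) ≠ 0, x i ^ (j + k : ℕ) * eval y (f i) :=
          (Finset.sum_filter_of_ne fun i _ => right_ne_zero_of_mul).symm
      _ = ∑ i : {i // eval y (f i) ≠ 0}, x i ^ (j + k : ℕ) * eval y (f i) :=
          Finset.sum_subtype _ (by simp) _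
      _ = ∑ l, v l ^ (j + k : ℕ) * eval y (f (e l)) := (e.sum_comp _).symm
      _ = ∑ l, v l ^ (j : ℕ) * (eval y (f (e l)) * v l ^ (k : ℕ)) :=
          Finset.sum_congr rfl fun l _ => by ring
  have hdiag : ∏ j, eval y (f (e j)) ≠ 0 := Finset.prod_ne_zero_iff.mpr fun j _ => (e j).2
  rw [← coe_evalRingHom, RingHom.map_det, hgram, Matrix.det_mul, Matrix.det_mul,
    Matrix.det_transpose, Matrix.det_diagonal]
  exact mul_ne_zero (mul_ne_zero hv hdiag) hv

theorem sum_sub_card_le (hx : Function.Injective x)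
    (hf : ∀ k, (powerMoment x f k).natDegree ≤ k) {y₀ : K} {s : ℕ}
    (hs : #{i | eval y₀ (f i) ≠ 0} = s) (Y : Finset K) :
    ∑ y ∈ Y, (s - #{i | eval y (f i) ≠ 0}) ≤ s * (s - 1) := by
  set N : K → ℕ := fun y => #{i | eval y (f i) ≠ 0}
  set Δ := (momentHankel x f s).det
  have hΔ : Δ ≠ 0 := by
    intro h
    exact eval_det_momentHankel_ne_zero f hx hs ((congrArg (eval y₀) h).trans eval_zero)
  have hdvd : ∏ y ∈ Y, (X - C y) ^ (s - N y) ∣ Δ := by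
    refine Finset.prod_dvd_of_coprime (fun y _ y' _ hyy' => ?_) fun y _ => ?_
    · exact (isCoprime_X_sub_C_of_isUnit_sub (sub_ne_zero.mpr hyy').isUnit).pow
    · refine (pow_dvd_pow _ ?_).trans (X_sub_C_pow_dvd_det _ y)
      rw [Fintype.card_fin]
      exact Nat.sub_le_sub_left (rank_eval_momentHankel_le x f s y) s
  calc ∑ y ∈ Y, (s - N y) = (∏ y ∈ Y, (X - C y) ^ (s - N y)).natDegree := by
        rw [natDegree_prod_of_monic _ _ fun y _ => (monic_X_sub_C y).pow _]
        simp only [natDegree_pow, natDegree_X_sub_C, mul_one]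
    _ ≤ Δ.natDegree := natDegree_le_of_dvd hdvd hΔ
    _ ≤ s * (s - 1) := natDegree_det_momentHankel_le x f hf s

theorem card_mul_sub_card_le_sum_erase [Fintype K] (hx : Function.Injective x)
    (hf : ∀ k, (powerMoment x f k).natDegree ≤ k) {y₀ : K} {s : ℕ}
    (hs : #{i | eval y₀ (f i) ≠ 0} = s) :
    s * (Fintype.card K - s) ≤ ∑ y ∈ Finset.univ.erase y₀, #{i | eval y (f i) ≠ 0} := by
  set N : K → ℕ := fun y => #{i | eval y (f i) ≠ 0}
  obtain rfl | hspos := Nat.eq_zero_or_pos s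
  · simp
  have hdefect : ∑ y ∈ Finset.univ.erase y₀, (s - N y) ≤ s * (s - 1) :=
    sum_sub_card_le f hx hf hs _
  have hconst : s * (Fintype.card K - 1) ≤
      ∑ y ∈ Finset.univ.erase y₀, (s - N y) + ∑ y ∈ Finset.univ.erase y₀, N y := by
    rw [← Finset.sum_add_distrib, ← Finset.card_univ, mul_comm,
      ← Finset.card_erase_of_mem (Finset.mem_univ y₀), ← smul_eq_mul]
    exact Finset.card_nsmul_le_sum _ _ _ fun y _ => by omega
  calc s * (Fintype.card K - s) = s * (Fintype.card K - 1) - s * (s - 1) := by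
        rw [← Nat.mul_sub, Nat.sub_sub_sub_cancel_right hspos]
    _ ≤ ∑ y ∈ Finset.univ.erase y₀, N y := by omega

end MomentHankel

section KerIndicatorSpan

open Polynomial

theorem natDegree_powerMoment_one_sub_pow_le {K : Type*} [Field K] [Fintype K] (β : K) {L : K[X]}
    (hL : L.natDegree ≤ 1) (k : ℕ) :
    (powerMoment id (fun t : K => 1 - (C (t * β) + L) ^ (Fintype.card K - 1)) k).natDegree ≤ k := by
  have hexpand : powerMoment id (fun t : K => 1 - (C (t * β) + L) ^ (Fintype.card K - 1)) k =
      C (∑ t : K, t ^ k) - ∑ m ∈ Finset.range (Fintype.card K - 1 + 1),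
        C (∑ t : K, t ^ (k + m)) *
          (C (β ^ m * ((Fintype.card K - 1).choose m : K)) * L ^ (Fintype.card K - 1 - m)) := by
    simp only [powerMoment, id, mul_sub, mul_one, Finset.sum_sub_distrib, map_sum, Finset.sum_mul]
    congr 1
    rw [Finset.sum_comm]
    refine Finset.sum_congr rfl fun t _ => ?_
    rw [add_pow, Finset.mul_sum]
    refine Finset.sum_congr rfl fun m _ => ?_
    simp only [C_mul, C_pow, map_natCast, pow_add]
    ring
  rw [hexpand]
  refine (natDegree_sub_le _ _).trans (max_le (by rw [natDegree_C]; exact k.zero_le)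
    (natDegree_sum_le_of_forall_le _ _ fun m _ => ?_))
  -- The power sum `∑ t ^ (k + m)` kills every term in which `L` has exponent larger than `k`.
  obtain hkm | hkm := lt_or_ge (k + m) (Fintype.card K - 1)
  · simp [FiniteField.sum_pow_lt_card_sub_one K _ hkm]
  · calc _ ≤ (L ^ (Fintype.card K - 1 - m)).natDegree :=
          (natDegree_C_mul_le _ _).trans (natDegree_C_mul_le _ _)
      _ ≤ (Fintype.card K - 1 - m) * 1 := natDegree_pow_le_of_le _ hL
      _ ≤ k := by omega

variable (F E : Type*) [Field F] [AddCommGroup E] [Module F E]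

/-- The functions on `E` spanned by the indicators of the kernels of linear forms, that is, of
`E` and of its linear hyperplanes: the vector-space counterpart of the code `C_p`. -/
def kerIndicatorSpan : Submodule F (E → F) :=
  Submodule.span F (Set.range fun φ : Module.Dual F E => Set.indicator (LinearMap.ker φ : Set E) 1)

variable {F E} {G : E → F}

theorem comp_mem_kerIndicatorSpan {E' : Type*} [AddCommGroup E'] [Module F E'] (L : E' →ₗ[F] E)
    (hG : G ∈ kerIndicatorSpan F E) : G ∘ L ∈ kerIndicatorSpan F E' := by
  suffices kerIndicatorSpan F E ≤ (kerIndicatorSpan F E').comap (LinearMap.funLeft F F L) from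
    this hG
  refine Submodule.span_le.mpr ?_
  rintro _ ⟨φ, rfl⟩
  exact Submodule.subset_span ⟨φ ∘ₗ L, rfl⟩

theorem sum_indicator_one {R α : Type*} [NonAssocSemiring R] [Fintype α] (S : Set α) :
    ∑ v, S.indicator (1 : α → R) v = S.ncard := by
  classical
  simp only [Set.indicator_apply, Pi.one_apply, Finset.sum_boole, Set.ncard_eq_toFinset_card',
    Set.filter_mem_univ_eq_toFinset]

theorem sum_eq_zero_of_mem_kerIndicatorSpan [Finite F] [Fintype E] (hE : 2 ≤ finrank F E)
    (hG : G ∈ kerIndicatorSpan F E) : ∑ v, G v = 0 := by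
  cases nonempty_fintype F
  induction hG using Submodule.span_induction with
  | mem _ hφ =>
    obtain ⟨φ, rfl⟩ := hφ
    have hker : finrank F (LinearMap.ker φ) ≠ 0 := by
      have := LinearMap.finrank_range_add_finrank_ker φ
      have := (LinearMap.range φ).finrank_le
      rw [Module.finrank_self] at this
      omega
    calc ∑ v, Set.indicator (LinearMap.ker φ : Set E) (1 : E → F) v
        = (Nat.card (LinearMap.ker φ) : F) := sum_indicator_one _
      _ = 0 := by
          rw [Module.natCard_eq_pow_finrank (K := F), Nat.card_eq_fintype_card, Nat.cast_pow,
            Nat.cast_card_eq_zero, zero_pow hker]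
  | zero => simp
  | add G₁ G₂ _ _ h₁ h₂ => simp [Finset.sum_add_distrib, h₁, h₂]
  | smul c G _ h => simp [← Finset.mul_sum, h]

variable [Fintype F]

theorem indicator_ker_apply (φ : Module.Dual F E) (v : E) :
    Set.indicator (LinearMap.ker φ : Set E) 1 v = 1 - φ v ^ (Fintype.card F - 1) := by
  by_cases hv : φ v = 0
  · have hQ : Fintype.card F - 1 ≠ 0 := (Nat.sub_pos_of_lt Fintype.one_lt_card).ne'
    simp [hv, hQ]
  · simp [hv, FiniteField.pow_card_sub_one_eq_one]

theorem exists_eval_eq_natDegree_powerMoment_le (hG : G ∈ kerIndicatorSpan F E) (a b w : E) :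
    ∃ f : F → F[X], (∀ t y, eval y (f t) = G (a + t • b + y • w)) ∧
      ∀ k, (powerMoment id f k).natDegree ≤ k := by
  induction hG using Submodule.span_induction with
  | mem _ hφ =>
    obtain ⟨φ, rfl⟩ := hφ
    refine ⟨fun t => 1 - (C (t * φ b) + (C (φ a) + X * C (φ w))) ^ (Fintype.card F - 1),
      fun t y => ?_, natDegree_powerMoment_one_sub_pow_le _ (by compute_degree)⟩
    simp only [indicator_ker_apply, map_add, map_smul, smul_eq_mul, eval_sub, eval_one, eval_pow,
      eval_add, eval_mul, eval_C, eval_X]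
    ring
  | zero => exact ⟨0, by simp, by simp [powerMoment]⟩
  | add G₁ G₂ _ _ h₁ h₂ =>
    obtain ⟨f₁, heval₁, hdeg₁⟩ := h₁
    obtain ⟨f₂, heval₂, hdeg₂⟩ := h₂
    refine ⟨f₁ + f₂, by simp [heval₁, heval₂], fun k => ?_⟩
    simp only [powerMoment, Pi.add_apply, mul_add, Finset.sum_add_distrib]
    exact natDegree_add_le_of_degree_le (hdeg₁ k) (hdeg₂ k)
  | smul c G _ h =>
    obtain ⟨f, heval, hdeg⟩ := h
    refine ⟨c • f, by simp [heval], fun k => ?_⟩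
    simp only [powerMoment, Pi.smul_apply, mul_smul_comm, ← Finset.smul_sum]
    exact (natDegree_smul_le _ _).trans (hdeg k)

end KerIndicatorSpan

section Cone

variable {F : Type} [Field F] {n : ℕ}

instance [Finite F] : Finite (ProjPoint F n) :=
  inferInstanceAs (Finite {W : Submodule F (Fin n → F) // finrank F W = 1})

namespace ProjPoint

/-- The projective point spanned by a nonzero vector. -/
def mk (v : Fin n → F) (hv : v ≠ 0) : ProjPoint F n :=
  ⟨Submodule.span F {v}, finrank_span_singleton hv⟩

theorem mk_eq_iff_mem {v : Fin n → F} (hv : v ≠ 0) {P : ProjPoint F n} : mk v hv = P ↔ v ∈ P.1 := by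
  refine ⟨fun h => h ▸ Submodule.mem_span_singleton_self v, fun h => Subtype.ext ?_⟩
  refine Submodule.eq_of_le_of_finrank_eq ((Submodule.span_singleton_le_iff_mem v P.1).mpr h) ?_
  rw [P.2]
  exact finrank_span_singleton hv

theorem exists_eq_mk (P : ProjPoint F n) : ∃ v, ∃ hv : v ≠ 0, P = mk v hv := by
  obtain ⟨v, hvP, hv⟩ := P.1.exists_mem_ne_zero_of_ne_bot fun h => by
    have hP := P.2
    rw [h, finrank_bot] at hP
    exact zero_ne_one hP
  exact ⟨v, hv, ((mk_eq_iff_mem hv).mpr hvP).symm⟩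

theorem mk_mem_pointsIn_iff {v : Fin n → F} (hv : v ≠ 0) {W : Submodule F (Fin n → F)} :
    mk v hv ∈ pointsIn F n W ↔ v ∈ W :=
  Submodule.span_singleton_le_iff_mem v W

end ProjPoint

/-- The nonzero vectors spanning a point of `V`, that is, the cone over `V` without its apex. -/
def affineCone (V : Set (ProjPoint F n)) : Set (Fin n → F) :=
  {v | ∃ hv : v ≠ 0, ProjPoint.mk v hv ∈ V}

theorem affineCone_inter_pointsIn (V : Set (ProjPoint F n)) (W : Submodule F (Fin n → F)) :
    affineCone (V ∩ pointsIn F n W) = affineCone V ∩ W := by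
  ext v
  exact ⟨fun ⟨hv, hV, hW⟩ => ⟨⟨hv, hV⟩, (ProjPoint.mk_mem_pointsIn_iff hv).mp hW⟩,
    fun ⟨⟨hv, hV⟩, hW⟩ => ⟨hv, hV, (ProjPoint.mk_mem_pointsIn_iff hv).mpr hW⟩⟩

theorem affineCone_diff_pointsIn (V : Set (ProjPoint F n)) (W : Submodule F (Fin n → F)) :
    affineCone (V \ pointsIn F n W) = affineCone V \ W := by
  ext v
  exact ⟨fun ⟨hv, hV, hW⟩ => ⟨⟨hv, hV⟩, fun h => hW ((ProjPoint.mk_mem_pointsIn_iff hv).mpr h)⟩,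
    fun ⟨⟨hv, hV⟩, hW⟩ => ⟨hv, hV, fun h => hW ((ProjPoint.mk_mem_pointsIn_iff hv).mp h)⟩⟩

theorem affineCone_pointsIn (W : Submodule F (Fin n → F)) :
    affineCone (pointsIn F n W) = (W : Set (Fin n → F)) \ {0} := by
  ext v
  exact ⟨fun ⟨hv, hW⟩ => ⟨(ProjPoint.mk_mem_pointsIn_iff hv).mp hW, hv⟩,
    fun ⟨hW, hv⟩ => ⟨hv, (ProjPoint.mk_mem_pointsIn_iff hv).mpr hW⟩⟩

theorem ncard_affineCone [Fintype F] (V : Set (ProjPoint F n)) :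
    (affineCone V).ncard = (Fintype.card F - 1) * V.ncard := by
  cases nonempty_fintype V
  let e : (Σ P : V, {v : P.1.1 // v ≠ 0}) → affineCone V := fun Pv =>
    have hv : Pv.2.1.1 ≠ 0 := fun h => Pv.2.2 (Subtype.ext h)
    ⟨Pv.2.1, hv, by rw [(ProjPoint.mk_eq_iff_mem hv).mpr Pv.2.1.2]; exact Pv.1.2⟩
  have he : Function.Bijective e := by
    refine ⟨?_, fun ⟨v, hv, hvV⟩ => ⟨⟨⟨.mk v hv, hvV⟩,
      ⟨v, Submodule.mem_span_singleton_self v⟩, fun h => hv (congrArg Subtype.val h)⟩, rfl⟩⟩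
    rintro ⟨⟨P, hP⟩, ⟨v, hvP⟩, hv⟩ ⟨⟨P', hP'⟩, ⟨v', hvP'⟩, hv'⟩ h
    obtain rfl : v = v' := congrArg Subtype.val h
    have hv₀ : v ≠ 0 := fun h => hv (Subtype.ext h)
    obtain rfl : P = P' :=
      ((ProjPoint.mk_eq_iff_mem hv₀).mpr hvP).symm.trans ((ProjPoint.mk_eq_iff_mem hv₀).mpr hvP')
    rfl
  have hfiber (P : ProjPoint F n) : Nat.card {v : P.1 // v ≠ 0} = Fintype.card F - 1 := by
    classical
    cases nonempty_fintype P.1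
    rw [Nat.card_eq_fintype_card, Fintype.card_subtype_compl, Fintype.card_subtype_eq,
      Module.card_eq_pow_finrank (K := F), P.2, pow_one]
  rw [← Nat.card_coe_set_eq, ← Nat.card_congr (Equiv.ofBijective e he), Nat.card_sigma]
  simp only [hfiber, Finset.sum_const, Finset.card_univ, smul_eq_mul, mul_comm,
    ← Nat.card_eq_fintype_card, Nat.card_coe_set_eq]

theorem ncard_pointsIn [Fintype F] (W : Submodule F (Fin n → F)) :
    (Fintype.card F - 1) * (pointsIn F n W).ncard = Fintype.card F ^ finrank F W - 1 := by
  rw [← ncard_affineCone, affineCone_pointsIn, Set.ncard_sdiff_singleton_of_mem W.zero_mem,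
    ← Nat.card_eq_fintype_card, ← Module.natCard_eq_pow_finrank (K := F) (V := W)]
  rfl

end Cone

section HyperplaneCode

variable {F : Type} [Field F] {p n : ℕ}

theorem exists_ker_eq_of_finrank_add_one {K E : Type*} [Field K] [AddCommGroup E] [Module K E]
    [FiniteDimensional K E] {H : Submodule K E} (hH : finrank K H + 1 = finrank K E) :
    ∃ φ : Module.Dual K E, LinearMap.ker φ = H := by
  have hlt : H < ⊤ := lt_top_iff_ne_top.mpr fun h => by
    rw [h, finrank_top] at hH
    omega
  obtain ⟨φ, hφ, hle⟩ := H.exists_le_ker_of_lt_top hlt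
  have hker := Module.Dual.finrank_ker_add_one_of_ne_zero hφ
  exact ⟨φ, (Submodule.eq_of_le_of_finrank_eq hle (by omega)).symm⟩

theorem exists_kerIndicatorSpan_eq_code [CharP F p] (hn : n ≠ 0) {c : ProjPoint F n → ZMod p}
    (hc : c ∈ hypCode F p n) :
    ∃ G ∈ kerIndicatorSpan F (Fin n → F), ∀ (v : Fin n → F) (hv : v ≠ 0),
      G v = ZMod.castHom dvd_rfl F (c (ProjPoint.mk v hv)) := by
  induction hc using Submodule.span_induction with
  | mem _ hH =>
    obtain ⟨H, hH, rfl⟩ := hH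
    obtain ⟨φ, rfl⟩ := exists_ker_eq_of_finrank_add_one (H := H)
      (by rw [hH, Module.finrank_fin_fun]; omega)
    refine ⟨_, Submodule.subset_span ⟨φ, rfl⟩, fun v hv => ?_⟩
    by_cases h : v ∈ LinearMap.ker φ
    · simp [charVec, h, ProjPoint.mk_mem_pointsIn_iff hv]
    · simp [charVec, h, ProjPoint.mk_mem_pointsIn_iff hv]
  | zero => exact ⟨0, Submodule.zero_mem _, fun v hv => by simp⟩
  | add c₁ c₂ _ _ h₁ h₂ =>
    obtain ⟨G₁, hG₁, heq₁⟩ := h₁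
    obtain ⟨G₂, hG₂, heq₂⟩ := h₂
    exact ⟨G₁ + G₂, add_mem hG₁ hG₂, fun v hv => by simp [heq₁ v hv, heq₂ v hv]⟩
  | smul z c _ h =>
    obtain ⟨G, hG, heq⟩ := h
    exact ⟨ZMod.castHom dvd_rfl F z • G, Submodule.smul_mem _ _ hG, fun v hv => by
      simp [heq v hv]⟩

variable {V : Set (ProjPoint F n)}

theorem exists_kerIndicatorSpan_eqOn_affineCone [CharP F p] (hn : n ≠ 0)
    (hV : charVec F p n V ∈ hypCode F p n) :
    ∃ G ∈ kerIndicatorSpan F (Fin n → F), Set.EqOn G ((affineCone V).indicator 1) {0}ᶜ := by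
  classical
  obtain ⟨G, hG, heq⟩ := exists_kerIndicatorSpan_eq_code hn hV
  refine ⟨G, hG, fun v hv => ?_⟩
  have hmem : v ∈ affineCone V ↔ ProjPoint.mk v hv ∈ V := exists_prop_of_true hv
  rw [heq v hv, charVec]
  by_cases h : ProjPoint.mk v hv ∈ V
  · simp [h, hmem]
  · simp [h, hmem]

/-- A codeword comes from a function summing to `0` over every subspace of vector dimension at
least `2`, and each point of `V` contributes `|F| - 1 = -1` to that sum. -/
theorem cast_secant_eq_apply_zero [Finite F] {G : (Fin n → F) → F}
    (hG : G ∈ kerIndicatorSpan F (Fin n → F))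
    (hGV : Set.EqOn G ((affineCone V).indicator 1) {0}ᶜ)
    {W : Submodule F (Fin n → F)} (hW : 2 ≤ finrank F W) :
    (secant F n V W : F) = G 0 := by
  classical
  cases nonempty_fintype F
  cases nonempty_fintype W
  have hsum : ∑ v : W, G v = 0 :=
    sum_eq_zero_of_mem_kerIndicatorSpan hW (comp_mem_kerIndicatorSpan W.subtype hG)
  have hsplit (v : W) : G v = (if v = 0 then G 0 else 0) +
      (Subtype.val ⁻¹' affineCone V : Set W).indicator 1 v := by
    obtain rfl | hv := eq_or_ne v 0
    · simp [affineCone]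
    · rw [hGV (x := v) (by simpa using hv), if_neg hv, zero_add]
      rfl
  have hcone : (Subtype.val ⁻¹' affineCone V : Set W).ncard =
      (Fintype.card F - 1) * secant F n V W := by
    rw [secant, ← ncard_affineCone, affineCone_inter_pointsIn, Set.inter_comm,
      ← Subtype.image_preimage_coe, Set.ncard_image_of_injective _ Subtype.val_injective]
    rfl
  simp only [hsplit, Finset.sum_add_distrib, Finset.sum_ite_eq', Finset.mem_univ, if_true,
    sum_indicator_one, hcone] at hsum
  rw [Nat.cast_mul, Nat.cast_pred Fintype.card_pos, Nat.cast_card_eq_zero] at hsum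
  linear_combination -hsum

theorem cast_secant_eq_cast_ncard [Finite F] [CharP F p] (hV : charVec F p n V ∈ hypCode F p n)
    {W : Submodule F (Fin n → F)} (hW : 2 ≤ finrank F W) :
    (secant F n V W : F) = V.ncard := by
  have hn : 2 ≤ n := hW.trans (W.finrank_le.trans_eq (Module.finrank_fin_fun F))
  obtain ⟨G, hG, hGV⟩ := exists_kerIndicatorSpan_eqOn_affineCone (by omega) hV
  have htop : secant F n V ⊤ = V.ncard := by simp [secant, pointsIn]
  rw [← htop, cast_secant_eq_apply_zero hG hGV hW, cast_secant_eq_apply_zero hG hGV]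
  rwa [finrank_top, Module.finrank_fin_fun]

end HyperplaneCode

section LineBound

open scoped Finset

theorem ncard_setOf_add_smul_mem_diff {F E : Type*} [Field F] [AddCommGroup E] [Module F E]
    {ℓ : Submodule F E} {c : E} (hc : c ∈ ℓ) {y : F} (hy : y ≠ 0) (A : Set E) :
    {w | w ∉ ℓ ∧ c + y • w ∈ A}.ncard = (A \ ℓ).ncard := by
  have hpre : {w | w ∉ ℓ ∧ c + y • w ∈ A} = (fun w => c + y • w) ⁻¹' (A \ ℓ) := by
    ext w
    simp [Submodule.add_mem_iff_right ℓ hc, Submodule.smul_mem_iff ℓ hy, and_comm]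
  rw [hpre, Set.ncard_preimage_of_injective_subset_range]
  · exact (add_right_injective c).comp (smul_right_injective E hy)
  · exact fun v _ => ⟨y⁻¹ • (v - c), by simp [smul_inv_smul₀ hy]⟩

open Classical in
theorem sum_notMem_sum_card_add_smul_mem {F E ι : Type*} [Field F] [Fintype F] [AddCommGroup E]
    [Module F E] [Fintype E] [Fintype ι] {ℓ : Submodule F E} {c : ι → E} (hc : ∀ i, c i ∈ ℓ)
    (A : Set E) :
    ∑ w with w ∉ ℓ, ∑ y ∈ Finset.univ.erase (0 : F), #{i | c i + y • w ∈ A} =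
      (Fintype.card F - 1) * (Fintype.card ι * (A \ ℓ).ncard) := by
  have hfix (y : F) (hy : y ∈ Finset.univ.erase 0) :
      ∑ w with w ∉ ℓ, #{i | c i + y • w ∈ A} = Fintype.card ι * (A \ ℓ).ncard :=
    calc ∑ w with w ∉ ℓ, #{i | c i + y • w ∈ A}
        = ∑ i, #{w | w ∉ ℓ ∧ c i + y • w ∈ A} := by
          simp only [Finset.card_filter (fun i => c i + y • _ ∈ A)]
          rw [Finset.sum_comm]
          simp only [← Finset.card_filter, Finset.filter_filter]
      _ = ∑ _i : ι, (A \ ℓ).ncard := Finset.sum_congr rfl fun i _ => by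
          rw [← ncard_setOf_add_smul_mem_diff (hc i) (Finset.ne_of_mem_erase hy) A,
            Set.ncard_eq_toFinset_card', Set.toFinset_ofPred]
      _ = Fintype.card ι * (A \ ℓ).ncard := by simp
  rw [Finset.sum_comm, Finset.sum_congr rfl hfix, Finset.sum_const, smul_eq_mul,
    Finset.card_erase_of_mem (Finset.mem_univ _), Finset.card_univ]

theorem add_smul_ne_zero_of_notMem_span {F E : Type*} [Field F] [AddCommGroup E] [Module F E]
    {a b : E} (ha : a ∉ Submodule.span F {b}) (t : F) : a + t • b ≠ 0 := fun h =>
  ha (eq_neg_of_add_eq_zero_left h ▸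
    neg_mem (Submodule.smul_mem _ t (Submodule.mem_span_singleton_self b)))

variable {F : Type} [Field F] {p n : ℕ} {V : Set (ProjPoint F n)}

theorem exists_eq_span_pair {ℓ : Submodule F (Fin n → F)} (hℓ : finrank F ℓ = 2)
    {B : ProjPoint F n} (hB : B ∈ pointsIn F n ℓ) :
    ∃ a b, ∃ hb : b ≠ 0, B = .mk b hb ∧ a ∉ Submodule.span F {b} ∧
      ℓ = Submodule.span F {a, b} := by
  obtain ⟨b, hb, rfl⟩ := B.exists_eq_mk
  have hlt : Submodule.span F {b} < ℓ := lt_of_le_of_ne hB fun h => by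
    rw [← h, finrank_span_singleton hb] at hℓ
    omega
  obtain ⟨a, haℓ, ha⟩ := SetLike.exists_of_lt hlt
  have hle : Submodule.span F {a, b} ≤ ℓ :=
    Submodule.span_le.mpr (Set.pair_subset haℓ (hB (Submodule.mem_span_singleton_self b)))
  have hlt' : Submodule.span F {b} < Submodule.span F {a, b} :=
    lt_of_le_of_ne (Submodule.span_mono (by simp)) fun h =>
      ha (h ▸ Submodule.subset_span (by simp))
  have hrank := Submodule.finrank_lt_finrank_of_lt hlt'
  rw [finrank_span_singleton hb] at hrank
  exact ⟨a, b, hb, rfl, ha, (Submodule.eq_of_le_of_finrank_le hle (by omega)).symm⟩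

open Classical in
theorem ncard_inter_pointsIn_span_pair_diff [Fintype F] {a b : Fin n → F} (hb : b ≠ 0)
    (ha : a ∉ Submodule.span F {b}) :
    ((V ∩ pointsIn F n (Submodule.span F {a, b})) \ {.mk b hb}).ncard =
      #{t : F | a + t • b ∈ affineCone V} := by
  have hne := add_smul_ne_zero_of_notMem_span ha
  rw [← Set.toFinset_ofPred, ← Set.ncard_eq_toFinset_card']
  refine (Set.ncard_congr (fun t _ => .mk (a + t • b) (hne t)) ?_ ?_ ?_).symm
  · rintro t ⟨_, htV⟩
    refine ⟨⟨htV, (ProjPoint.mk_mem_pointsIn_iff _).mpr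
      (Submodule.mem_span_pair.mpr ⟨1, t, by rw [one_smul]⟩)⟩, fun h => ha ?_⟩
    exact (Submodule.add_mem_iff_left _ (Submodule.smul_mem _ t
      (Submodule.mem_span_singleton_self b))).mp ((ProjPoint.mk_eq_iff_mem _).mp h)
  · intro t u _ _ htu
    by_contra hne'
    set P := ProjPoint.mk (a + t • b) (hne t) with hP
    have ht : a + t • b ∈ P.1 := (ProjPoint.mk_eq_iff_mem _).mp hP.symm
    have hu : a + u • b ∈ P.1 := (ProjPoint.mk_eq_iff_mem _).mp htu.symm
    have hbP : b ∈ P.1 := by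
      refine (Submodule.smul_mem_iff P.1 (sub_ne_zero.mpr hne')).mp ?_
      simpa [sub_smul] using sub_mem ht hu
    have haP : a ∈ P.1 := (Submodule.add_mem_iff_left _ (Submodule.smul_mem _ t hbP)).mp ht
    rw [← (ProjPoint.mk_eq_iff_mem hb).mpr hbP] at haP
    exact ha haP
  · rintro P ⟨⟨hPV, hPℓ⟩, hPb⟩
    obtain ⟨v, hv, rfl⟩ := P.exists_eq_mk
    obtain ⟨α, β, rfl⟩ := Submodule.mem_span_pair.mp ((ProjPoint.mk_mem_pointsIn_iff hv).mp hPℓ)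
    have hα : α ≠ 0 := by
      rintro rfl
      refine hPb ((ProjPoint.mk_eq_iff_mem hv).mpr ?_)
      exact Submodule.mem_span_singleton.mpr ⟨β, by simp⟩
    have hmk : ProjPoint.mk (a + (α⁻¹ * β) • b) (hne _) = .mk (α • a + β • b) hv :=
      (ProjPoint.mk_eq_iff_mem _).mpr (Submodule.mem_span_singleton.mpr
        ⟨α⁻¹, by rw [smul_add, inv_smul_smul₀ hα, smul_smul]⟩)
    exact ⟨α⁻¹ * β, ⟨hne _, hmk ▸ hPV⟩, hmk⟩

variable [Fintype F] [CharP F p]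

open Classical in
theorem card_mul_sub_card_le_sum_card_affineCone (hV : charVec F p n V ∈ hypCode F p n)
    {a b w : Fin n → F} (ha : a ∉ Submodule.span F {w, b}) :
    #{t : F | a + t • b ∈ affineCone V} *
        (Fintype.card F - #{t : F | a + t • b ∈ affineCone V}) ≤
      ∑ y ∈ Finset.univ.erase (0 : F), #{t : F | a + t • b + y • w ∈ affineCone V} := by
  have hn : n ≠ 0 := by
    rintro rfl
    exact ha (Subsingleton.elim 0 a ▸ zero_mem _)
  obtain ⟨G, hG, hGV⟩ := exists_kerIndicatorSpan_eqOn_affineCone hn hV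
  obtain ⟨f, heval, hdeg⟩ := exists_eval_eq_natDegree_powerMoment_le hG a b w
  have hne (t y : F) : a + t • b + y • w ≠ 0 := fun h => ha <| by
    rw [eq_neg_of_add_eq_zero_left ((add_assoc _ _ _).symm.trans h)]
    exact neg_mem (Submodule.mem_span_pair.mpr ⟨y, t, add_comm _ _⟩)
  have hsupp (t y : F) : (f t).eval y ≠ 0 ↔ a + t • b + y • w ∈ affineCone V := by
    simp [heval, hGV (hne t y)]
  simpa only [hsupp, zero_smul, add_zero] using
    card_mul_sub_card_le_sum_erase f Function.injective_id hdeg (y₀ := 0) rfl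

theorem ncard_line_mul_sub_le (hV : charVec F p n V ∈ hypCode F p n)
    {ℓ : Submodule F (Fin n → F)} (hℓ : finrank F ℓ = 2) {B : ProjPoint F n}
    (hB : B ∈ pointsIn F n ℓ) {s : ℕ} (hs : ((V ∩ pointsIn F n ℓ) \ {B}).ncard = s) :
    (Fintype.card F ^ n - Fintype.card F ^ 2) * (s * (Fintype.card F - s)) ≤
      (Fintype.card F - 1) * (Fintype.card F * ((Fintype.card F - 1) *
        (V \ pointsIn F n ℓ).ncard)) := by
  classical
  obtain ⟨a, b, hb, rfl, ha, rfl⟩ := exists_eq_span_pair hℓ hB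
  set ℓ := Submodule.span F {a, b}
  have hoff : #{w | w ∉ ℓ} = Fintype.card F ^ n - Fintype.card F ^ 2 := by
    rw [← Fintype.card_subtype, Fintype.card_subtype_compl, Fintype.card_fun, Fintype.card_fin,
      ← hℓ, ← Module.card_eq_pow_finrank]
  have hplane (w : Fin n → F) (hw : w ∈ ({w | w ∉ ℓ} : Finset _)) : s * (Fintype.card F - s) ≤
      ∑ y ∈ Finset.univ.erase (0 : F), #{t : F | a + t • b + y • w ∈ affineCone V} := by
    rw [← hs, ncard_inter_pointsIn_span_pair_diff hb ha]
    refine card_mul_sub_card_le_sum_card_affineCone hV fun haw => ?_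
    exact (Finset.mem_filter.mp hw).2 (mem_span_insert_exchange haw ha)
  rw [← hoff, ← ncard_affineCone, affineCone_diff_pointsIn, ← smul_eq_mul,
    ← sum_notMem_sum_card_add_smul_mem (c := fun t : F => a + t • b)
      (fun t => Submodule.mem_span_pair.mpr ⟨1, t, by rw [one_smul]⟩)]
  exact Finset.card_nsmul_le_sum _ _ _ hplane

end LineBound

section QuasiHermitian

theorem cube_add_one_le_mul_sq_sub {q s : ℤ} (hq : 5 ≤ q) (hs : q + 2 ≤ s)
    (hs' : s + q + 2 ≤ q ^ 2) : q ^ 3 + 1 ≤ s * (q ^ 2 - s) := by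
  have hconcave : (q + 2) * (q ^ 2 - (q + 2)) ≤ s * (q ^ 2 - s) := by
    nlinarith [mul_nonneg (sub_nonneg.mpr hs) (sub_nonneg.mpr hs')]
  nlinarith

theorem mul_mul_add_one_mul_sub_one_lt {q z : ℤ} (hq : 2 ≤ q) (hz : q ^ 2 ≤ z) :
    (q ^ 2 - 1) * ((z * q + 1) * (z - 1)) < (q ^ 3 + 1) * (z ^ 2 - q ^ 2) := by
  have hq2 : 0 < q ^ 2 - 1 := by nlinarith
  have hz0 : 0 ≤ z := (sq_nonneg q).trans hz
  have hzz : 0 ≤ z ^ 2 - (q ^ 2) ^ 2 := sub_nonneg.mpr (by gcongr)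
  calc (q ^ 2 - 1) * ((z * q + 1) * (z - 1))
      < (q ^ 2 - 1) * ((z * q + 1) * (z - 1)) + ((q + 1) * (z ^ 2 - (q ^ 2) ^ 2) +
          (q ^ 2 - 1) * (z * (q - 1)) + (q ^ 2 + 1) * (q ^ 2 - 1)) := by
        have : 0 ≤ q - 1 := by omega
        exact lt_add_of_pos_right _ (by positivity)
    _ = (q ^ 3 + 1) * (z ^ 2 - q ^ 2) := by ring

theorem mul_mul_sub_one_mul_add_one_lt {q z : ℤ} (hq : 2 ≤ q) (hz : q ^ 3 ≤ z) :
    (q ^ 2 - 1) * ((z * q - 1) * (z + 1)) < (q ^ 3 + 1) * (z ^ 2 - q ^ 2) := by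
  have hz0 : 0 < z := lt_of_lt_of_le (by positivity) hz
  have hqz : 0 ≤ z - q := sub_nonneg.mpr ((le_self_pow₀ (by omega) three_ne_zero).trans hz)
  have hrest : 0 < z * (q ^ 2 + q - 1) - 1 := by nlinarith
  calc (q ^ 2 - 1) * ((z * q - 1) * (z + 1))
      < (q ^ 2 - 1) * ((z * q - 1) * (z + 1)) + ((q + 1) * (z * (z - q ^ 3)) +
          q ^ 4 * (z - q) + (z * (q ^ 2 + q - 1) - 1)) :=
        lt_add_of_pos_right _ (by positivity)
    _ = (q ^ 3 + 1) * (z ^ 2 - q ^ 2) := by ring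

theorem hermitian_size_mul_lt {q : ℤ} {r : ℕ} (hq : 2 ≤ q) (hr : 2 ≤ r) :
    (q ^ 2 - 1) * ((q ^ (r + 1) + (-1) ^ r) * (q ^ r - (-1) ^ r)) <
      (q ^ 3 + 1) * ((q ^ r) ^ 2 - q ^ 2) := by
  rw [pow_succ q r]
  obtain heven | hodd := r.even_or_odd
  · rw [heven.neg_one_pow]
    exact mul_mul_add_one_mul_sub_one_lt hq (pow_le_pow_right₀ (by omega) hr)
  · have hr3 : 3 ≤ r := by
      obtain ⟨k, rfl⟩ := hodd
      omega
    rw [hodd.neg_one_pow, sub_neg_eq_add, ← sub_eq_add_neg]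
    exact mul_mul_sub_one_mul_add_one_lt hq (pow_le_pow_right₀ (by omega) hr3)

variable {F : Type} [Field F]

theorem cast_eq_one_of_hermitian_size {q r N : ℕ} (hq : (q : F) = 0) (hr : r ≠ 0)
    (hN : (N : ℤ) * ((q : ℤ) ^ 2 - 1) =
      ((q : ℤ) ^ (r + 1) + (-1) ^ r) * ((q : ℤ) ^ r - (-1) ^ r)) : (N : F) = 1 := by
  have hcast := congrArg (Int.cast : ℤ → F) hN
  push_cast [hq, zero_pow hr, zero_pow r.succ_ne_zero, zero_pow two_ne_zero] at hcast
  have hsign : ((-1 : F) ^ r) ^ 2 = 1 := by rw [← pow_mul', pow_mul, neg_one_sq, one_pow]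
  linear_combination -hcast + hsign

theorem exists_point_ncard_line_diff_mem_Icc [Fintype F] {n q : ℕ} (hF : Fintype.card F = q ^ 2)
    (hq : 4 ≤ q) (V : Set (ProjPoint F n)) {ℓ : Submodule F (Fin n → F)}
    (hℓ : finrank F ℓ = 2) (hlow : q + 2 ≤ secant F n V ℓ) (hupp : secant F n V ℓ + q < q ^ 2) :
    ∃ B ∈ pointsIn F n ℓ, q + 2 ≤ ((V ∩ pointsIn F n ℓ) \ {B}).ncard ∧
      ((V ∩ pointsIn F n ℓ) \ {B}).ncard + q + 2 ≤ q ^ 2 := by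
  rw [secant] at hlow hupp
  obtain hgap | hgap := Nat.lt_or_ge ((V ∩ pointsIn F n ℓ).ncard + q + 1) (q ^ 2)
  · have hline : (V ∩ pointsIn F n ℓ).ncard < (pointsIn F n ℓ).ncard := by
      have hcard : (q ^ 2 - 1) * (pointsIn F n ℓ).ncard = (q ^ 2 - 1) * (q ^ 2 + 1) := by
        rw [← hF, ncard_pointsIn, hℓ, mul_comm, ← Nat.sq_sub_sq, one_pow]
      have := Nat.eq_of_mul_eq_mul_left (by omega) hcard
      omega
    obtain ⟨B, hBℓ, hBV⟩ := Set.exists_mem_notMem_of_ncard_lt_ncard hline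
    refine ⟨B, hBℓ, ?_⟩
    rw [Set.sdiff_singleton_eq_self hBV]
    omega
  · obtain ⟨B, hB⟩ := Set.nonempty_of_ncard_ne_zero (s := V ∩ pointsIn F n ℓ) (by omega)
    have hq2 : 2 * q + 4 ≤ q ^ 2 := by nlinarith
    refine ⟨B, hB.2, ?_⟩
    rw [Set.ncard_sdiff_singleton_of_mem hB]
    omega

variable [Fintype F] {p q r : ℕ} [CharP F p] {V : Set (ProjPoint F (r + 1))}

theorem not_ncard_line_diff_mem_Icc (hF : Fintype.card F = q ^ 2) (hq : 4 < q) (hr : 2 ≤ r)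
    (hN : (V.ncard : ℤ) * ((q : ℤ) ^ 2 - 1) =
      ((q : ℤ) ^ (r + 1) + (-1) ^ r) * ((q : ℤ) ^ r - (-1) ^ r))
    (hV : charVec F p (r + 1) V ∈ hypCode F p (r + 1))
    {ℓ : Submodule F (Fin (r + 1) → F)} (hℓ : finrank F ℓ = 2) {B : ProjPoint F (r + 1)}
    (hB : B ∈ pointsIn F (r + 1) ℓ) {s : ℕ} (hs : ((V ∩ pointsIn F (r + 1) ℓ) \ {B}).ncard = s)
    (hlow : q + 2 ≤ s) (hupp : s + q + 2 ≤ q ^ 2) : False := by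
  have hbound : ((q ^ 2) ^ (r + 1) - (q ^ 2) ^ 2) * (s * (q ^ 2 - s)) ≤
      (q ^ 2 - 1) * (q ^ 2 * ((q ^ 2 - 1) * V.ncard)) := by
    rw [← hF]
    refine (ncard_line_mul_sub_le hV hℓ hB hs).trans ?_
    gcongr
    · exact V.toFinite
    · exact Set.sdiff_subset
  have hpow : (q ^ 2) ^ 2 ≤ (q ^ 2) ^ (r + 1) := Nat.pow_le_pow_right (by positivity) (by omega)
  zify [hpow, (show s ≤ q ^ 2 by omega), (show 1 ≤ q ^ 2 by nlinarith)] at hbound hlow hupp hq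
  have hz : (q : ℤ) ^ 2 ≤ (q ^ r) ^ 2 := by
    gcongr
    exact le_self_pow₀ (by omega) (by omega)
  have hprod := cube_add_one_le_mul_sq_sub hq hlow hupp
  refine (hermitian_size_mul_lt (q := (q : ℤ)) (by omega) hr).not_ge
    (le_of_mul_le_mul_left (a := (q : ℤ) ^ 2) ?_ (by positivity))
  calc (q : ℤ) ^ 2 * (((q : ℤ) ^ 3 + 1) * (((q : ℤ) ^ r) ^ 2 - (q : ℤ) ^ 2))
      ≤ (q : ℤ) ^ 2 * ((s * ((q : ℤ) ^ 2 - s)) * (((q : ℤ) ^ r) ^ 2 - (q : ℤ) ^ 2)) := by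
        gcongr
    _ = (((q : ℤ) ^ 2) ^ (r + 1) - ((q : ℤ) ^ 2) ^ 2) * (s * ((q : ℤ) ^ 2 - s)) := by ring
    _ ≤ ((q : ℤ) ^ 2 - 1) * ((q : ℤ) ^ 2 * (((q : ℤ) ^ 2 - 1) * V.ncard)) := hbound
    _ = (q : ℤ) ^ 2 * (((q : ℤ) ^ 2 - 1) *
        (((q : ℤ) ^ (r + 1) + (-1) ^ r) * ((q : ℤ) ^ r - (-1) ^ r))) := by
        rw [← hN]
        ring

theorem stmt6_general (hF : Fintype.card F = q ^ 2) (hq : 4 < q) (hr : 2 ≤ r)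
    (hN : (V.ncard : ℤ) * ((q : ℤ) ^ 2 - 1) =
      ((q : ℤ) ^ (r + 1) + (-1) ^ r) * ((q : ℤ) ^ r - (-1) ^ r))
    (hV : charVec F p (r + 1) V ∈ hypCode F p (r + 1))
    {ℓ : Submodule F (Fin (r + 1) → F)} (hℓ : finrank F ℓ = 2) :
    secant F (r + 1) V ℓ ≤ q + 1 ∨ q ^ 2 - q + 1 ≤ secant F (r + 1) V ℓ := by
  by_contra! hcon
  obtain ⟨hlow, hupp⟩ := hcon
  have hq0 : (q : F) = 0 := by
    have hcard := Nat.cast_card_eq_zero F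
    rwa [hF, Nat.cast_pow, pow_eq_zero_iff two_ne_zero] at hcard
  have hcast : (secant F (r + 1) V ℓ : F) = 1 := by
    rw [cast_secant_eq_cast_ncard hV hℓ.ge, cast_eq_one_of_hermitian_size hq0 (by omega) hN]
  have hne : secant F (r + 1) V ℓ + q ≠ q ^ 2 := fun h => by
    simpa [hcast, hq0] using congrArg (Nat.cast : ℕ → F) h
  obtain ⟨B, hB, hlow', hupp'⟩ :=
    exists_point_ncard_line_diff_mem_Icc hF hq.le V hℓ hlow (by omega)
  exact not_ncard_line_diff_mem_Icc hF hq hr hN hV hℓ hB rfl hlow' hupp'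

end QuasiHermitian

/-- each line meets a quasi-Hermitian variety with characteristic
vector in `C_p` in at most `q + 1` or at least `q² - q + 1` points. -/
theorem stmt6 (p h q r : ℕ) (hp : p.Prime) (hh : 1 ≤ h) (hq : q = p ^ h) (hq4 : 4 < q)
    (hr : 3 ≤ r)
    (F : Type) [Field F] [Fintype F] (hF : Fintype.card F = q ^ 2)
    (V : Set (ProjPoint F (r + 1))) (hV : IsQuasiHermitian F q r V)
    (hcode : charVec F p (r + 1) V ∈ hypCode F p (r + 1)) :
    ∀ ℓ : Submodule F (Fin (r + 1) → F), finrank F ℓ = 2 →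
      secant F (r + 1) V ℓ ≤ q + 1 ∨ q ^ 2 - q + 1 ≤ secant F (r + 1) V ℓ := by
  have : Fact p.Prime := ⟨hp⟩
  have : CharP F p := charP_of_card_eq_prime_pow (f := h * 2) (by rw [hF, hq, pow_mul])
  exact fun ℓ hℓ => stmt6_general hF hq4 (by omega) hV.1 hcode hℓ
end
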